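/- arXiv:2309.16096 — 7 statements merged into one kernel-verified Lean document; each statement's English description precedes it below -/
import Mathlib

section
/- Let n ≥ 1 and K ≥ 1 be natural numbers, let E := EuclideanSpace ℝ (Fin n), let 0 < ε ≤ 1 and δ ≥ 0. Let π : Fin K → ℝ satisfy π k ≥ 0 for all k and ∑ k, π k = 1, and for each k let q k be a Borel probability measure on E with q k {x | ‖x‖ ≤ 1 − ε} = 1. Let f : E → Fin K be Borel measurable and assume the robust risk satisfies R(f, ε) ≤ δ. Then there exist a class k : Fin K and a set S ⊆ {x | ‖x‖ ≤ 1} such that q k S ≥ 1 − δ and volume S ≤ volume {x | ‖x‖ ≤ 1 ∧ f x = k} * Real.exp (−(n : ℝ) * ε). -/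
/-!
Since the weights `π k` sum to one, some class `k` has robust error at most `δ`; let `S` be the set
of points of norm at most `1 - ε` without a robust error, so that `q k S ≥ 1 - δ`. Every `x` in `S`
has the form `(1 - ε) • y` with `‖y‖ ≤ 1`, and `y` lies within `ε` of `x`, whence `f y = k`. So `S`
lies in the contraction by `1 - ε` of the region that `f` assigns to `k`, and this contraction
multiplies the volume by `(1 - ε) ^ n ≤ exp (-n * ε)`.
-/

open MeasureTheory

/-- The robust risk of a classifier `f` against `ℓ2` perturbations of size `ε`,
for class priors `π` and class conditionals `q`, with data constrained to the
unit ball of `E`. -/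
noncomputable def robustRisk {n K : ℕ}
    (π : Fin K → ℝ) (q : Fin K → Measure (EuclideanSpace ℝ (Fin n)))
    (f : EuclideanSpace ℝ (Fin n) → Fin K) (ε : ℝ) : ℝ :=
  ∑ k, π k * (q k {x | ∃ x', ‖x' - x‖ ≤ ε ∧ ‖x'‖ ≤ 1 ∧ f x' ≠ k}).toReal

open scoped Pointwise

theorem exists_le_of_sum_mul_le {𝕜 ι : Type*} [Field 𝕜] [LinearOrder 𝕜] [IsStrictOrderedRing 𝕜]
    {s : Finset ι} {w a : ι → 𝕜} {c : 𝕜} (hw : ∀ i ∈ s, 0 ≤ w i) (hw_sum : ∑ i ∈ s, w i = 1)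
    (h : ∑ i ∈ s, w i * a i ≤ c) : ∃ i ∈ s, a i ≤ c := by
  have hw_pos : 0 < ∑ i ∈ s, w i := hw_sum ▸ one_pos
  obtain ⟨i, hi, hai⟩ := (concaveOn_id convex_univ).exists_le_of_centerMass (p := a) hw hw_pos
    fun _ _ ↦ Set.mem_univ _
  rw [s.centerMass_eq_of_sum_1 a hw_sum] at hai
  exact ⟨i, hi, hai.trans h⟩

/-- The points that a perturbation of size at most `ε` can carry to a point of the closed unit ball
not labelled `k` by `f`: the event whose `q k`-probability enters the robust risk. The ambient space
and the set of labels are arbitrary, in contrast to `robustRisk`. -/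
def robustErrorSet {E ι : Type*} [SeminormedAddCommGroup E] (f : E → ι) (ε : ℝ) (k : ι) : Set E :=
  {x | ∃ x', ‖x' - x‖ ≤ ε ∧ ‖x'‖ ≤ 1 ∧ f x' ≠ k}

theorem sdiff_robustErrorSet_subset_smul {E ι : Type*} [NormedAddCommGroup E] [NormedSpace ℝ E]
    (f : E → ι) {ε : ℝ} (hε : 0 ≤ ε) (hε1 : ε ≤ 1) (k : ι) :
    {x | ‖x‖ ≤ 1 - ε} \ robustErrorSet f ε k ⊆ (1 - ε) • {x | ‖x‖ ≤ 1 ∧ f x = k} := by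
  rintro x ⟨hx_norm, hx_robust⟩
  obtain ⟨y, hy, rfl⟩ : x ∈ (1 - ε) • Metric.closedBall (0 : E) 1 := by
    rwa [smul_unitClosedBall_of_nonneg (sub_nonneg.2 hε1), mem_closedBall_zero_iff]
  rw [mem_closedBall_zero_iff] at hy
  have hy_near : ‖y - (1 - ε) • y‖ ≤ ε := calc
    ‖y - (1 - ε) • y‖ = ‖ε • y‖ := by rw [sub_smul, one_smul, sub_sub_cancel]
    _ = ε * ‖y‖ := norm_smul_of_nonneg hε y
    _ ≤ ε := mul_le_of_le_one_right hε hy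
  have hy_label : f y = k := by
    by_contra h
    exact hx_robust ⟨y, hy_near, hy, h⟩
  exact Set.smul_mem_smul_set ⟨hy, hy_label⟩

theorem one_sub_pow_le_exp_neg_mul {ε : ℝ} (hε1 : ε ≤ 1) (n : ℕ) :
    (1 - ε) ^ n ≤ Real.exp (-(n : ℝ) * ε) := calc
  (1 - ε) ^ n ≤ Real.exp (-ε) ^ n :=
    pow_le_pow_left₀ (sub_nonneg.2 hε1) (Real.one_sub_le_exp_neg ε) n
  _ = Real.exp (-(n : ℝ) * ε) := by rw [← Real.exp_nat_mul, mul_neg, neg_mul]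

section FiniteDimensional

variable {E : Type*} [NormedAddCommGroup E] [NormedSpace ℝ E] [FiniteDimensional ℝ E]
  [MeasurableSpace E] [BorelSpace E]

theorem addHaar_one_sub_smul_le (μ : Measure E) [μ.IsAddHaarMeasure] {ε : ℝ} (hε1 : ε ≤ 1)
    (s : Set E) :
    μ ((1 - ε) • s) ≤ μ s * ENNReal.ofReal (Real.exp (-(Module.finrank ℝ E : ℝ) * ε)) := by
  rw [Measure.addHaar_smul_of_nonneg μ (sub_nonneg.2 hε1), mul_comm]
  gcongr
  exact one_sub_pow_le_exp_neg_mul hε1 _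

theorem exists_concentrated_class_general {ι : Type*} [Fintype ι]
    (μ : Measure E) [μ.IsAddHaarMeasure] {ε δ : ℝ} (hε : 0 ≤ ε) (hε1 : ε ≤ 1)
    {π : ι → ℝ} (hπ : ∀ k, 0 ≤ π k) (hπ1 : ∑ k, π k = 1)
    {q : ι → Measure E} [∀ k, IsProbabilityMeasure (q k)]
    (hsupp : ∀ k, q k {x | ‖x‖ ≤ 1 - ε} = 1) (f : E → ι)
    (hrisk : ∑ k, π k * (q k).real (robustErrorSet f ε k) ≤ δ) :
    ∃ (k : ι) (S : Set E),
      S ⊆ {x | ‖x‖ ≤ 1} ∧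
      1 - δ ≤ (q k).real S ∧
      μ S ≤ μ {x | ‖x‖ ≤ 1 ∧ f x = k} *
        ENNReal.ofReal (Real.exp (-(Module.finrank ℝ E : ℝ) * ε)) := by
  obtain ⟨k, -, hk⟩ := exists_le_of_sum_mul_le (fun k _ ↦ hπ k) hπ1 hrisk
  refine ⟨k, {x | ‖x‖ ≤ 1 - ε} \ robustErrorSet f ε k, fun x hx ↦ hx.1.trans (sub_le_self 1 hε),
    ?_, ?_⟩
  · calc
      1 - δ ≤ (q k).real {x | ‖x‖ ≤ 1 - ε} - (q k).real (robustErrorSet f ε k) := by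
        rw [measureReal_def, hsupp k, ENNReal.toReal_one]
        gcongr
      _ ≤ (q k).real ({x | ‖x‖ ≤ 1 - ε} \ robustErrorSet f ε k) := le_measureReal_sdiff
  · exact (measure_mono (sdiff_robustErrorSet_subset_smul f hε hε1 k)).trans
      (addHaar_one_sub_smul_le μ hε1 _)

end FiniteDimensional

theorem exists_concentrated_class
    (n K : ℕ) (hn : 1 ≤ n) (hK : 1 ≤ K)
    (ε δ : ℝ) (hε : 0 < ε) (hε1 : ε ≤ 1) (hδ : 0 ≤ δ)
    (π : Fin K → ℝ) (hπ : ∀ k, 0 ≤ π k) (hπ1 : ∑ k, π k = 1)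
    (q : Fin K → Measure (EuclideanSpace ℝ (Fin n)))
    (hq : ∀ k, IsProbabilityMeasure (q k))
    (hsupp : ∀ k, q k {x | ‖x‖ ≤ 1 - ε} = 1)
    (f : EuclideanSpace ℝ (Fin n) → Fin K) (hf : Measurable f)
    (hrisk : robustRisk π q f ε ≤ δ) :
    ∃ (k : Fin K) (S : Set (EuclideanSpace ℝ (Fin n))),
      S ⊆ {x | ‖x‖ ≤ 1} ∧
      1 - δ ≤ (q k S).toReal ∧
      volume S ≤ volume {x | ‖x‖ ≤ 1 ∧ f x = k} * ENNReal.ofReal (Real.exp (-(n : ℝ) * ε)) := by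
  simpa only [finrank_euclideanSpace_fin, measureReal_def] using
    exists_concentrated_class_general volume hε.le hε1 hπ hπ1 hsupp f hrisk
end

section
/- Let n ≥ 1 and K ≥ 1 be natural numbers, let E := EuclideanSpace ℝ (Fin n), let 0 ≤ ε ≤ 1 and δ, γ ≥ 0. Let π : Fin K → ℝ satisfy π k ≥ 0 for all k and ∑ k, π k = 1. For each k let q k be a Borel probability measure on E with q k {x | ‖x‖ ≤ 1 − ε} = 1, and suppose there are sets S_k ⊆ E such that q k (S_k) ≥ 1 − δ and q k (⋃_{k' ≠ k} (S_{k'})^{+2ε}) ≤ γ for every k, where expansions are taken with respect to the Euclidean metric. Then there exists a classifier f : E → Fin K whose robust risk satisfies R(f, ε) ≤ δ + γ. -/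
open MeasureTheory

/-- The ε-expansion of a set in a metric space. -/
def expandSet {X : Type*} [MetricSpace X] (S : Set X) (ε : ℝ) : Set X :=
  {x | ∃ y ∈ S, dist x y ≤ ε}

/-!
Enlarge the sets `S k` to measurable sets `M k` without increasing the measures of the expansions
of the rival sets. The cores obtained from the `M k` by removing the `2ε`-expansions of the other
`M j` are then pairwise more than `2ε` apart, so their `ε`-expansions are disjoint, and a classifier
constant on each of these expansions errs robustly on class `k` only outside the `k`-th core.

Since the `S k` may be non-measurable, an outer-measure lower bound on `S k` says nothing about its
complement; this is why the `M k` are needed. They come from an adjunction: the expansions of the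
rivals of the `S k` lie in sets `T k` exactly when each `S k` avoids the expansions of the
complements of the rival `T j`. Taking `T k` to be a Gδ hull makes the largest such family
measurable, because closed sets have closed expansions in a proper space.
-/

open Set Filter Topology
open scoped ENNReal Function

theorem exists_isGδ_superset_measure_eq {X : Type*} [TopologicalSpace X] [MeasurableSpace X]
    (μ : Measure X) [μ.OuterRegular] (s : Set X) :
    ∃ t, s ⊆ t ∧ IsGδ t ∧ μ t = μ s := by
  obtain ⟨u, -, hu_pos, hu_lim⟩ := exists_seq_strictAnti_tendsto' (zero_lt_one' ℝ≥0∞)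
  choose V hsV hV_open hV_le using fun m ↦ s.exists_isOpen_le_add μ (hu_pos m).1.ne'
  have hs : s ⊆ ⋂ m, V m := subset_iInter hsV
  have h_lim : Tendsto (fun m ↦ μ s + u m) atTop (𝓝 (μ s)) := by
    simpa only [add_zero] using tendsto_const_nhds.add hu_lim
  have h_le : μ (⋂ m, V m) ≤ μ s :=
    ge_of_tendsto' h_lim fun m ↦ (measure_mono (iInter_subset V m)).trans (hV_le m)
  exact ⟨⋂ m, V m, hs, .iInter_of_isOpen hV_open, h_le.antisymm (measure_mono hs)⟩

theorem exists_forall_subset_preimage_singleton {X ι : Type*} [Nonempty ι] {A : ι → Set X}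
    (hA : Pairwise (Disjoint on A)) : ∃ f : X → ι, ∀ k, A k ⊆ f ⁻¹' {k} := by
  refine ⟨fun x ↦ Classical.epsilon fun k ↦ x ∈ A k, fun k x hx ↦ ?_⟩
  have hx' : x ∈ A (Classical.epsilon fun k ↦ x ∈ A k) :=
    Classical.epsilon_spec (p := fun k ↦ x ∈ A k) ⟨k, hx⟩
  exact hA.eq (not_disjoint_iff.2 ⟨x, hx', hx⟩)

section Expansion

variable {X : Type*} [MetricSpace X] {A B : Set X} {r s : ℝ}

theorem expandSet_mono (h : A ⊆ B) : expandSet A r ⊆ expandSet B r :=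
  fun _ ⟨y, hy, hxy⟩ ↦ ⟨y, h hy, hxy⟩

theorem disjoint_expandSet_left_iff : Disjoint (expandSet A r) B ↔ Disjoint A (expandSet B r) := by
  simp only [disjoint_left, expandSet, mem_ofPred_eq, not_exists, not_and, forall_exists_index,
    and_imp]
  exact ⟨fun h a ha b hb hab ↦ h a ha (dist_comm a b ▸ hab) hb,
    fun h b a ha hba hb ↦ h ha b hb (dist_comm b a ▸ hba)⟩

theorem expandSet_expandSet_subset : expandSet (expandSet A r) s ⊆ expandSet A (r + s) := by
  rintro x ⟨y, ⟨a, ha, hya⟩, hxy⟩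
  exact ⟨a, ha, (dist_triangle x y a).trans (by linarith)⟩

theorem disjoint_expandSet_expandSet (h : Disjoint (expandSet A (r + s)) B) :
    Disjoint (expandSet A r) (expandSet B s) :=
  disjoint_expandSet_left_iff.1 (h.mono_left expandSet_expandSet_subset)

theorem expandSet_iUnion {ι : Sort*} (A : ι → Set X) :
    expandSet (⋃ i, A i) r = ⋃ i, expandSet (A i) r := by
  ext x
  simp only [expandSet, mem_iUnion, mem_ofPred_eq]
  tauto

theorem isClosed_expandSet [ProperSpace X] (hA : IsClosed A) : IsClosed (expandSet A r) := by
  have h_balls : expandSet A r = ⋃ y ∈ A, Metric.closedBall y r := by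
    ext x
    simp only [expandSet, mem_ofPred_eq, mem_iUnion, Metric.mem_closedBall, exists_prop]
  rw [h_balls]
  obtain hr | hr := lt_or_ge r 0
  · simp only [Metric.closedBall_eq_empty.2 hr, iUnion_empty, isClosed_empty]
  · exact hA.cthickening_eq_biUnion_closedBall hr ▸ Metric.isClosed_cthickening

theorem measurableSet_expandSet_compl_of_isGδ [ProperSpace X] [MeasurableSpace X] [BorelSpace X]
    (hA : IsGδ A) : MeasurableSet (expandSet Aᶜ r) := by
  obtain ⟨V, hV_open, rfl⟩ := isGδ_iff_eq_iInter_nat.1 hA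
  rw [compl_iInter, expandSet_iUnion]
  exact .iUnion fun m ↦ (isClosed_expandSet (hV_open m).isClosed_compl).measurableSet

end Expansion

section RivalExpansion

variable {X ι : Type*} [MetricSpace X] {r ε : ℝ}

/-- The union of the `r`-expansions of all members of the family `S` other than `S k`: the region
within distance `r` of the classes competing with `k`. -/
def rivalExpansion (S : ι → Set X) (r : ℝ) (k : ι) : Set X :=
  ⋃ k' ∈ {k' : ι | k' ≠ k}, expandSet (S k') r

theorem expandSet_subset_rivalExpansion (S : ι → Set X) {j k : ι} (hjk : j ≠ k) :
    expandSet (S j) r ⊆ rivalExpansion S r k :=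
  subset_biUnion_of_mem (u := fun j ↦ expandSet (S j) r) hjk

theorem rivalExpansion_le_iff {S T : ι → Set X} :
    rivalExpansion S r ≤ T ↔ S ≤ (rivalExpansion Tᶜ r)ᶜ := by
  have h_left : rivalExpansion S r ≤ T ↔ ∀ k j, j ≠ k → Disjoint (expandSet (S j) r) (Tᶜ k) := by
    simp only [Pi.le_def, rivalExpansion, iUnion_subset_iff, mem_ofPred_eq,
      Pi.compl_apply, disjoint_compl_right_iff_subset]
  have h_right : S ≤ (rivalExpansion Tᶜ r)ᶜ ↔
      ∀ j k, k ≠ j → Disjoint (S j) (expandSet (Tᶜ k) r) := by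
    simp only [Pi.le_def, rivalExpansion, Pi.compl_apply, subset_compl_iff_disjoint_right,
      disjoint_iUnion_right, mem_ofPred_eq]
  simp only [h_left, h_right, disjoint_expandSet_left_iff]
  exact ⟨fun h j k hkj ↦ h k j hkj.symm, fun h k j hjk ↦ h j k hjk.symm⟩

theorem exists_measurableSet_superset_measure_rivalExpansion_le [ProperSpace X] [MeasurableSpace X]
    [BorelSpace X] [Countable ι] (μ : ι → Measure X) [∀ k, (μ k).OuterRegular]
    (S : ι → Set X) (r : ℝ) :
    ∃ M : ι → Set X, (∀ k, S k ⊆ M k) ∧ (∀ k, MeasurableSet (M k)) ∧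
      ∀ k, μ k (rivalExpansion M r k) ≤ μ k (rivalExpansion S r k) := by
  choose T hST hT_Gδ hT_measure using fun k ↦
    exists_isGδ_superset_measure_eq (μ k) (rivalExpansion S r k)
  let M : ι → Set X := (rivalExpansion Tᶜ r)ᶜ
  have hM_rival : rivalExpansion M r ≤ T := rivalExpansion_le_iff.2 le_rfl
  refine ⟨M, rivalExpansion_le_iff.1 hST, fun k ↦ MeasurableSet.compl ?_,
    fun k ↦ (measure_mono (hM_rival k)).trans_eq (hT_measure k)⟩
  exact .biUnion (to_countable _) fun j _ ↦ measurableSet_expandSet_compl_of_isGδ (hT_Gδ j)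

theorem pairwise_disjoint_expandSet_sdiff_rivalExpansion (M : ι → Set X) :
    Pairwise (Disjoint on fun k ↦ expandSet (M k \ rivalExpansion M (2 * ε) k) ε) := by
  intro j k hjk
  have h_core : expandSet (M j \ rivalExpansion M (2 * ε) j) (2 * ε) ⊆ rivalExpansion M (2 * ε) k :=
    (expandSet_mono sdiff_subset).trans (expandSet_subset_rivalExpansion M hjk)
  exact disjoint_expandSet_expandSet (two_mul ε ▸ disjoint_sdiff_right.mono_left h_core)

theorem exists_classifier_expandSet_error_subset [Nonempty ι] (M : ι → Set X) (ε : ℝ) :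
    ∃ f : X → ι, ∀ k, expandSet {x | f x ≠ k} ε ⊆ (M k)ᶜ ∪ rivalExpansion M (2 * ε) k := by
  obtain ⟨f, hf⟩ := exists_forall_subset_preimage_singleton
    (pairwise_disjoint_expandSet_sdiff_rivalExpansion (ε := ε) M)
  refine ⟨f, fun k ↦ ?_⟩
  have h_disj : Disjoint (expandSet (M k \ rivalExpansion M (2 * ε) k) ε) {x | f x ≠ k} :=
    disjoint_compl_right_iff_subset.2 (hf k)
  rw [disjoint_expandSet_left_iff, ← subset_compl_iff_disjoint_left, sdiff_eq, compl_inter,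
    compl_compl] at h_disj
  exact h_disj

end RivalExpansion

theorem robustRisk_le_of_forall_class {n K : ℕ} {π : Fin K → ℝ} (hπ : ∀ k, 0 ≤ π k)
    (hπ1 : ∑ k, π k = 1) {q : Fin K → Measure (EuclideanSpace ℝ (Fin n))}
    [∀ k, IsFiniteMeasure (q k)] {f : EuclideanSpace ℝ (Fin n) → Fin K} {ε c : ℝ}
    (h : ∀ k, (q k).real (expandSet {x | f x ≠ k} ε) ≤ c) : robustRisk π q f ε ≤ c := by
  have h_class (k : Fin K) :
      (q k).real {x | ∃ x', ‖x' - x‖ ≤ ε ∧ ‖x'‖ ≤ 1 ∧ f x' ≠ k} ≤ c := by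
    refine (measureReal_mono ?_).trans (h k)
    rintro x ⟨x', hx, -, hfx⟩
    exact ⟨x', hfx, by rwa [dist_comm, dist_eq_norm]⟩
  calc robustRisk π q f ε ≤ ∑ k, π k * c :=
        Finset.sum_le_sum fun k _ ↦ mul_le_mul_of_nonneg_left (h_class k) (hπ k)
    _ = c := by rw [← Finset.sum_mul, hπ1, one_mul]

theorem exists_robust_classifier_of_strong_concentration_general {X ι : Type*} [MetricSpace X]
    [ProperSpace X] [MeasurableSpace X] [BorelSpace X] [Countable ι] [Nonempty ι]
    (q : ι → Measure X) [∀ k, IsProbabilityMeasure (q k)] (S : ι → Set X) (ε : ℝ) (δ γ : ι → ℝ)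
    (hconc : ∀ k, 1 - δ k ≤ (q k).real (S k))
    (hsep : ∀ k, (q k).real (rivalExpansion S (2 * ε) k) ≤ γ k) :
    ∃ f : X → ι, ∀ k, (q k).real (expandSet {x | f x ≠ k} ε) ≤ δ k + γ k := by
  obtain ⟨M, hSM, hM_meas, hM_rival⟩ :=
    exists_measurableSet_superset_measure_rivalExpansion_le q S (2 * ε)
  obtain ⟨f, hf⟩ := exists_classifier_expandSet_error_subset M ε
  refine ⟨f, fun k ↦ ?_⟩
  have h_compl : (q k).real (M k)ᶜ ≤ δ k := by
    rw [probReal_compl_eq_one_sub (hM_meas k)]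
    linarith [hconc k, measureReal_mono (μ := q k) (hSM k)]
  have h_rival : (q k).real (rivalExpansion M (2 * ε) k) ≤ γ k :=
    (ENNReal.toReal_mono (measure_ne_top _ _) (hM_rival k)).trans (hsep k)
  calc (q k).real (expandSet {x | f x ≠ k} ε)
      ≤ (q k).real ((M k)ᶜ ∪ rivalExpansion M (2 * ε) k) := measureReal_mono (hf k)
    _ ≤ (q k).real (M k)ᶜ + (q k).real (rivalExpansion M (2 * ε) k) := measureReal_union_le _ _
    _ ≤ δ k + γ k := add_le_add h_compl h_rival

theorem exists_robust_classifier_of_strong_concentration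
    (n K : ℕ) (hn : 1 ≤ n) (hK : 1 ≤ K)
    (ε δ γ : ℝ) (hε : 0 ≤ ε) (hε1 : ε ≤ 1) (hδ : 0 ≤ δ) (hγ : 0 ≤ γ)
    (π : Fin K → ℝ) (hπ : ∀ k, 0 ≤ π k) (hπ1 : ∑ k, π k = 1)
    (q : Fin K → Measure (EuclideanSpace ℝ (Fin n)))
    (hq : ∀ k, IsProbabilityMeasure (q k))
    (hsupp : ∀ k, q k {x | ‖x‖ ≤ 1 - ε} = 1)
    (S : Fin K → Set (EuclideanSpace ℝ (Fin n)))
    (hconc : ∀ k, 1 - δ ≤ (q k (S k)).toReal)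
    (hsep : ∀ k, (q k (⋃ k' ∈ {k' : Fin K | k' ≠ k}, expandSet (S k') (2 * ε))).toReal ≤ γ) :
    ∃ f : EuclideanSpace ℝ (Fin n) → Fin K, robustRisk π q f ε ≤ δ + γ := by
  have : Nonempty (Fin K) := Fin.pos_iff_nonempty.1 hK
  obtain ⟨f, hf⟩ := exists_robust_classifier_of_strong_concentration_general
    q S ε (fun _ ↦ δ) (fun _ ↦ γ) hconc hsep
  exact ⟨f, robustRisk_le_of_forall_class hπ hπ1 hf⟩
end

section
/- Let X be a metric space, let S, T, W ⊆ X and ε ≥ 0. Then (S \ T^{+2ε}) ∩ W^{−ε} ⊆ ((S^{+ε} \ T^{+ε}) ∩ W)^{−ε}. -/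
/-- The ε-contraction of a set in a metric space. -/
def contractSet {X : Type*} [MetricSpace X] (S : Set X) (ε : ℝ) : Set X :=
  {x | x ∈ S ∧ ∀ y, dist y x ≤ ε → y ∈ S}

section

variable {X : Type*} [MetricSpace X]

theorem gc_expandSet_contractSet {ε : ℝ} (hε : 0 ≤ ε) :
    GaloisConnection (fun S : Set X => expandSet S ε) (fun S => contractSet S ε) := by
  intro S U
  constructor
  · intro hSU x hx
    have ball_subset : ∀ y, dist y x ≤ ε → y ∈ U := fun y hyx => hSU ⟨x, hx, hyx⟩
    exact ⟨ball_subset x ((dist_self x).trans_le hε), ball_subset⟩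
  · rintro hSU y ⟨x, hx, hyx⟩
    exact (hSU hx).2 y hyx

theorem contractSet_compl {ε : ℝ} (hε : 0 ≤ ε) (S : Set X) :
    contractSet Sᶜ ε = (expandSet S ε)ᶜ := by
  ext x
  constructor
  · rintro ⟨-, hball⟩ ⟨y, hy, hxy⟩
    exact hball y ((dist_comm y x).trans_le hxy) hy
  · intro hx
    exact ⟨fun hxS => hx ⟨x, hxS, (dist_self x).trans_le hε⟩,
      fun y hyx hy => hx ⟨y, hy, (dist_comm x y).trans_le hyx⟩⟩

theorem expandSet_expandSet_subset_s6 (S : Set X) (ε δ : ℝ) :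
    expandSet (expandSet S δ) ε ⊆ expandSet S (ε + δ) := by
  rintro x ⟨y, ⟨z, hz, hyz⟩, hxy⟩
  exact ⟨z, hz, (dist_triangle x y z).trans (add_le_add hxy hyz)⟩

end

theorem contract_subset_key {X : Type*} [MetricSpace X] (S T W : Set X) (ε : ℝ) (hε : 0 ≤ ε) :
    (S \ expandSet T (2 * ε)) ∩ contractSet W ε ⊆
      contractSet ((expandSet S ε \ expandSet T ε) ∩ W) ε := by
  have gc := gc_expandSet_contractSet (X := X) hε
  have subset_contract_expand : S ⊆ contractSet (expandSet S ε) ε := gc.le_u_l S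
  have compl_subset_contract : (expandSet T (2 * ε))ᶜ ⊆ contractSet (expandSet T ε)ᶜ ε := by
    rw [contractSet_compl hε, two_mul]
    exact Set.compl_subset_compl.mpr (expandSet_expandSet_subset_s6 T ε ε)
  have contract_inter (A B : Set X) : contractSet (A ∩ B) ε = contractSet A ε ∩ contractSet B ε :=
    gc.u_inf
  rw [Set.sdiff_eq, Set.sdiff_eq, contract_inter, contract_inter]
  exact Set.inter_subset_inter_left _
    (Set.inter_subset_inter subset_contract_expand compl_subset_contract)
end

section
/- With the dual-projection setup: for every x' ∈ E with λ • x' ∈ C(x) = F + V, the active set is stable, i.e. Active(λ • x') = Active(λ • x); moreover, if λ • x' = f + v with f ∈ F and v ∈ V, then the projection satisfies P(λ • x') = f. -/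
open scoped RealInnerProductSpace Pointwise

/-!
For `f` in the open face `F` and `v` in the cone `V` generated by its active constraints, each
`t i` with `i ∈ A` is an outer normal of the polyhedron at `f`, hence so is `v`. Thus `f` is the
nearest point to `f + v`, and the constraints active at `f` are exactly those in `A`.
-/

section ConicCombinations

variable {ι R M : Type*} [Semiring R] [PartialOrder R] [IsOrderedRing R]
  [AddCommMonoid M] [Module R M]

theorem coe_hull_image_eq_setOf_sum_smul [Fintype ι] (t : ι → M) (A : Set ι) :
    (PointedCone.hull R (t '' A) : Set M) =
      {v | ∃ α : ι → R, (∀ i, 0 ≤ α i) ∧ (∀ i ∉ A, α i = 0) ∧ v = ∑ i, α i • t i} := by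
  ext v
  constructor
  · intro hv
    obtain ⟨l, hlA, rfl⟩ := (Finsupp.mem_span_image_iff_linearCombination _).mp hv
    refine ⟨fun i ↦ l i, fun i ↦ (l i).2, fun i hi ↦ ?_, ?_⟩
    · exact congrArg Subtype.val ((Finsupp.mem_supported' {c : R // 0 ≤ c} l).mp hlA i hi)
    · exact Finsupp.sum_fintype l _ fun i ↦ zero_smul _ (t i)
  · rintro ⟨α, hα_nonneg, hα_zero, rfl⟩
    refine Submodule.sum_mem _ fun i _ ↦ ?_
    by_cases hi : i ∈ A
    · exact PointedCone.smul_mem _ (hα_nonneg i)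
        (PointedCone.subset_hull (Set.mem_image_of_mem t hi))
    · simp only [hα_zero i hi, zero_smul, zero_mem]

end ConicCombinations

section Polyhedron

variable {ι E : Type*} [NormedAddCommGroup E] [InnerProductSpace ℝ E]

theorem eq_of_norm_sub_le_of_inner_nonpos {y p f : E} (hnear : ‖y - p‖ ≤ ‖y - f‖)
    (hinner : ⟪y - f, p - f⟫ ≤ 0) : p = f := by
  have hsq : ‖y - p‖ ^ 2 ≤ ‖y - f‖ ^ 2 := by gcongr
  have hexpand : ‖y - p‖ ^ 2 = ‖y - f‖ ^ 2 - 2 * ⟪y - f, p - f⟫ + ‖p - f‖ ^ 2 := by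
    rw [← norm_sub_sq_real, sub_sub_sub_cancel_right]
  have hzero : ‖p - f‖ ^ 2 = 0 := le_antisymm (by linarith) (sq_nonneg _)
  exact sub_eq_zero.mp (norm_eq_zero.mp (sq_eq_zero_iff.mp hzero))

/-- The one-sided polar `K°` of the family `t`, cut out by the constraints `⟪t i, d⟫ ≤ 1`. -/
def polarPolyhedron (t : ι → E) : Set E := {d | ∀ i, ⟪t i, d⟫ ≤ 1}

/-- The indices of the constraints of `polarPolyhedron t` that are tight at `d`. The paper's
`Active(y)` is `activeSet t (P y)`. -/
def activeSet (t : ι → E) (d : E) : Set ι := {i | ⟪t i, d⟫ = 1}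

/-- The face `F`: the points of `polarPolyhedron t` at which exactly the constraints in `A` are
tight. -/
def openFace (t : ι → E) (A : Set ι) : Set E :=
  {d | (∀ i ∈ A, ⟪t i, d⟫ = 1) ∧ ∀ i ∉ A, ⟪t i, d⟫ < 1}

variable {t : ι → E} {A : Set ι} {f v p : E}

theorem openFace_subset_polarPolyhedron : openFace t A ⊆ polarPolyhedron t := by
  intro d hd i
  by_cases hi : i ∈ A
  · exact (hd.1 i hi).le
  · exact (hd.2 i hi).le

theorem activeSet_eq_of_mem_openFace (hf : f ∈ openFace t A) : activeSet t f = A := by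
  ext i
  exact ⟨fun hi ↦ by_contra fun hiA ↦ (hf.2 i hiA).ne hi, hf.1 i⟩

theorem inner_sub_nonpos_of_mem_hull (hf : A ⊆ activeSet t f) (hp : p ∈ polarPolyhedron t)
    (hv : v ∈ PointedCone.hull ℝ (t '' A)) : ⟪v, p - f⟫ ≤ 0 := by
  have hdual : f - p ∈ PointedCone.dual (innerₗ E) (t '' A) := by
    rintro _ ⟨i, hi, rfl⟩
    rw [innerₗ_apply_apply, inner_sub_right, hf hi]
    exact sub_nonneg.mpr (hp i)
  rw [← PointedCone.dual_hull] at hdual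
  rw [← neg_sub, inner_neg_right]
  exact neg_nonpos.mpr (hdual hv)

theorem nearest_eq_of_mem_openFace_of_mem_hull (hp : p ∈ polarPolyhedron t)
    (hnear : ∀ z ∈ polarPolyhedron t, ‖f + v - p‖ ≤ ‖f + v - z‖)
    (hf : f ∈ openFace t A) (hv : v ∈ PointedCone.hull ℝ (t '' A)) : p = f := by
  refine eq_of_norm_sub_le_of_inner_nonpos (hnear f (openFace_subset_polarPolyhedron hf)) ?_
  rw [add_sub_cancel_left]
  exact inner_sub_nonpos_of_mem_hull (activeSet_eq_of_mem_openFace hf).ge hp hv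

theorem active_set_stable_general (t : ι → E) (A : Set ι) {y p : E}
    (hp : p ∈ polarPolyhedron t) (hnear : ∀ z ∈ polarPolyhedron t, ‖y - p‖ ≤ ‖y - z‖)
    (hy : y ∈ openFace t A + (PointedCone.hull ℝ (t '' A) : Set E)) :
    activeSet t p = A ∧
      ∀ f v, f ∈ openFace t A → v ∈ (PointedCone.hull ℝ (t '' A) : Set E) → y = f + v → p = f := by
  have hproj (f v : E) (hf : f ∈ openFace t A)
      (hv : v ∈ (PointedCone.hull ℝ (t '' A) : Set E)) (hfv : y = f + v) : p = f := by
    subst hfv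
    exact nearest_eq_of_mem_openFace_of_mem_hull hp hnear hf hv
  obtain ⟨f, hf, v, hv, hfv⟩ := Set.mem_add.mp hy
  refine ⟨?_, hproj⟩
  rw [hproj f v hf hv hfv.symm]
  exact activeSet_eq_of_mem_openFace hf

end Polyhedron

theorem active_set_stable
    {n : ℕ} {ι : Type*} [Fintype ι] (t : ι → EuclideanSpace ℝ (Fin n))
    -- `P` is the metric projection onto the polar polyhedron `K° = {d | ∀ i, ⟪t i, d⟫ ≤ 1}`
    (P : EuclideanSpace ℝ (Fin n) → EuclideanSpace ℝ (Fin n))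
    (hPmem : ∀ y, P y ∈ {d : EuclideanSpace ℝ (Fin n) | ∀ i, ⟪t i, d⟫ ≤ 1})
    (hPnear : ∀ y, ∀ z ∈ {d : EuclideanSpace ℝ (Fin n) | ∀ i, ⟪t i, d⟫ ≤ 1},
      ‖y - P y‖ ≤ ‖y - z‖)
    (x : EuclideanSpace ℝ (Fin n)) (lam : ℝ) (hlam : 0 < lam)
    -- the active set `A := Active (lam • x)`
    (A : Set ι) (hA : A = {i | ⟪t i, P (lam • x)⟫ = 1})
    -- the face `F`, the cone `V`, and the certified polyhedron `C = F + V`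
    (F V C : Set (EuclideanSpace ℝ (Fin n)))
    (hF : F = {d | (∀ i ∈ A, ⟪t i, d⟫ = 1) ∧ (∀ i ∉ A, ⟪t i, d⟫ < 1)})
    (hV : V = {v | ∃ α : ι → ℝ, (∀ i, 0 ≤ α i) ∧ (∀ i ∉ A, α i = 0) ∧ v = ∑ i, α i • t i})
    (hC : C = F + V)
    (x' : EuclideanSpace ℝ (Fin n)) (hx' : lam • x' ∈ C) :
    {i | ⟪t i, P (lam • x')⟫ = 1} = A ∧
    ∀ f v, f ∈ F → v ∈ V → lam • x' = f + v → P (lam • x') = f := by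
  rw [← coe_hull_image_eq_setOf_sum_smul] at hV
  subst hF hV hC
  exact active_set_stable_general t A (hPmem _) (hPnear _) hx'
end

section
/- Let E := EuclideanSpace ℝ (Fin n), let ι be a finite index type, t : ι → E, and K° := {d : E | ∀ i, ⟪t i, d⟫ ≤ 1}. Let f ∈ K°, let A := {i | ⟪t i, f⟫ = 1}, let α : ι → ℝ satisfy α i ≥ 0 for all i and α i = 0 for i ∉ A, and set v := ∑ i, α i • t i. Then for every z ∈ K°: ‖z − (f + v)‖² ≥ ‖z − f‖² + ‖v‖². In particular, ‖(f + v) − f‖ ≤ ‖(f + v) − z‖ for all z ∈ K°, i.e. f is a nearest point of K° to f + v. -/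
open scoped RealInnerProductSpace

/-!
A nonnegative combination `v` of the constraint normals that are active at `f` lies in the normal
cone of the polyhedron at `f`: it makes an angle of at least `π / 2` with `z - f` for every feasible
`z`. The law of cosines for `z - (f + v) = (z - f) - v` then has the nonnegative cross
term `-2 * ⟪z - f, v⟫`.
-/

section NormalCone

variable {E : Type*} [SeminormedAddCommGroup E] [InnerProductSpace ℝ E] {K : Set E} {x v z : E}

/-- The normal cone of `K` at `x`: the vectors whose inner product with every direction `z - x`,
`z ∈ K`, is nonpositive. It is encoded as the dual cone of the reversed directions `x - z`. -/
noncomputable def normalCone (K : Set E) (x : E) : PointedCone ℝ E :=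
  PointedCone.dual (innerₗ E) ((x - ·) '' K)

theorem mem_normalCone_iff : v ∈ normalCone K x ↔ ∀ z ∈ K, ⟪z - x, v⟫ ≤ 0 := by
  simp [normalCone, inner_sub_left]

theorem norm_sub_sq_add_norm_sq_le_of_mem_normalCone (hv : v ∈ normalCone K x) (hz : z ∈ K) :
    ‖z - x‖ ^ 2 + ‖v‖ ^ 2 ≤ ‖z - (x + v)‖ ^ 2 := by
  have hobtuse : ⟪z - x, v⟫ ≤ 0 := mem_normalCone_iff.1 hv z hz
  rw [← sub_sub, norm_sub_sq_real (z - x)]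
  linarith

theorem norm_add_sub_le_norm_add_sub_of_mem_normalCone (hv : v ∈ normalCone K x) (hz : z ∈ K) :
    ‖(x + v) - x‖ ≤ ‖(x + v) - z‖ := by
  rw [add_sub_cancel_left, norm_sub_rev]
  refine le_of_sq_le_sq ?_ (norm_nonneg _)
  exact (le_add_of_nonneg_left (sq_nonneg _)).trans
    (norm_sub_sq_add_norm_sq_le_of_mem_normalCone hv hz)

theorem hull_active_le_normalCone {ι : Type*} (t : ι → E) (c : ι → ℝ) (x : E) :
    PointedCone.hull ℝ (t '' {i | ⟪t i, x⟫ = c i}) ≤ normalCone {z | ∀ i, ⟪t i, z⟫ ≤ c i} x := by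
  refine Submodule.span_le.2 (Set.image_subset_iff.2 fun i hi ↦ mem_normalCone_iff.2 fun z hz ↦ ?_)
  rw [real_inner_comm, inner_sub_right, hi]
  exact sub_nonpos.2 (hz i)

end NormalCone

theorem sum_smul_mem_hull_image {R M ι : Type*} [Semiring R] [PartialOrder R] [IsOrderedRing R]
    [AddCommMonoid M] [Module R M] {s : Finset ι} {A : Set ι} {α : ι → R} (t : ι → M)
    (hα : ∀ i ∈ s, 0 ≤ α i) (hαA : ∀ i ∈ s, i ∉ A → α i = 0) :
    ∑ i ∈ s, α i • t i ∈ PointedCone.hull R (t '' A) := by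
  refine sum_mem fun i hi ↦ ?_
  by_cases hA : i ∈ A
  · exact PointedCone.smul_mem _ (hα i hi) (PointedCone.subset_hull (Set.mem_image_of_mem t hA))
  · simp [hαA i hi hA]

theorem nearest_point_of_face_plus_cone_general {E ι : Type*} [SeminormedAddCommGroup E]
    [InnerProductSpace ℝ E] (t : ι → E) (c : ι → ℝ) (f : E) {v : E}
    (hv : v ∈ PointedCone.hull ℝ (t '' {i | ⟪t i, f⟫ = c i})) :
    (∀ z : E, (∀ i, ⟪t i, z⟫ ≤ c i) → ‖z - f‖ ^ 2 + ‖v‖ ^ 2 ≤ ‖z - (f + v)‖ ^ 2) ∧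
    (∀ z : E, (∀ i, ⟪t i, z⟫ ≤ c i) → ‖(f + v) - f‖ ≤ ‖(f + v) - z‖) := by
  have hnormal : v ∈ normalCone {z | ∀ i, ⟪t i, z⟫ ≤ c i} f := hull_active_le_normalCone t c f hv
  exact ⟨fun _ hz ↦ norm_sub_sq_add_norm_sq_le_of_mem_normalCone hnormal hz,
    fun _ hz ↦ norm_add_sub_le_norm_add_sub_of_mem_normalCone hnormal hz⟩

theorem nearest_point_of_face_plus_cone
    {n : ℕ} {ι : Type*} [Fintype ι] (t : ι → EuclideanSpace ℝ (Fin n))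
    (f : EuclideanSpace ℝ (Fin n)) (hf : ∀ i, ⟪t i, f⟫ ≤ 1)
    (α : ι → ℝ) (hα : ∀ i, 0 ≤ α i) (hα0 : ∀ i, i ∉ {i | ⟪t i, f⟫ = 1} → α i = 0)
    (v : EuclideanSpace ℝ (Fin n)) (hv : v = ∑ i, α i • t i) :
    (∀ z : EuclideanSpace ℝ (Fin n), (∀ i, ⟪t i, z⟫ ≤ 1) →
      ‖z - f‖ ^ 2 + ‖v‖ ^ 2 ≤ ‖z - (f + v)‖ ^ 2) ∧
    (∀ z : EuclideanSpace ℝ (Fin n), (∀ i, ⟪t i, z⟫ ≤ 1) →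
      ‖(f + v) - f‖ ≤ ‖(f + v) - z‖) := by
  subst hv
  exact nearest_point_of_face_plus_cone_general t (fun _ ↦ 1) f
    (sum_smul_mem_hull_image t (fun i _ ↦ hα i) fun i _ ↦ hα0 i)
end

section
/- Let n, M ≥ 1, let E := EuclideanSpace ℝ (Fin n), let x ∈ E, λ > 0, and s : Fin M → E. Define the primal value set P := {r : ℝ | ∃ c : Fin M → ℝ, r = (∑ i, |c i|) + (λ/2) * ‖x − ∑ i, c i • s i‖²} and the dual value set D := {r : ℝ | ∃ d : E, (∀ i, |⟪s i, d⟫| ≤ 1) ∧ r = ⟪x, d⟫ − ‖d‖²/(2λ)}. Then sInf P = sSup D; moreover the infimum is attained by some c* : Fin M → ℝ and the supremum is attained by some d* ∈ E with ∀ i, |⟪s i, d*⟫| ≤ 1. -/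
open scoped RealInnerProductSpace

/-!
For a coefficient vector `c` and a dual point `d`, completing the square writes the duality gap as
`(g c - ⟪S c, d⟫) + ‖lam • (x - S c) - d‖² / (2 * lam)`, where `g` is the regularizer. Dual
feasibility makes the first term nonnegative, which is weak duality. At a primal minimizer `c`,
which exists because the `ℓ¹` norm is coercive, the choice `d = lam • (x - S c)` kills the second
term. First-order optimality says that `⟪S ·, d⟫` is a subgradient of `g` at `c`; since `g` is a
seminorm, this means that `d` is feasible and that `⟪S c, d⟫ = g c`, so the gap vanishes.
-/

open Filter Set Topology

section RegularizedLeastSquares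

variable {F E : Type*} [AddCommGroup F] [Module ℝ F] [NormedAddCommGroup E] [InnerProductSpace ℝ E]

/-- The objective `g c + (lam / 2) * ‖x - S c‖²` of least squares with regularizer `g`, to be
minimized over `c`. -/
noncomputable def regularizedPrimal (g : F → ℝ) (S : F →ₗ[ℝ] E) (x : E) (lam : ℝ) (c : F) : ℝ :=
  g c + lam / 2 * ‖x - S c‖ ^ 2

/-- The objective of the dual problem, to be maximized over `regularizedDualFeasible`. -/
noncomputable def regularizedDual (x : E) (lam : ℝ) (d : E) : ℝ :=
  ⟪x, d⟫ - ‖d‖ ^ 2 / (2 * lam)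

/-- The feasible set of the dual problem: the `d` for which the functional `⟪S ·, d⟫` is dominated
by `g`. For a norm `g` this says that `Sᵀ d` lies in the dual unit ball. -/
def regularizedDualFeasible (g : F → ℝ) (S : F →ₗ[ℝ] E) : Set E :=
  {d | ∀ v, ⟪S v, d⟫ ≤ g v}

theorem regularizedPrimal_sub_regularizedDual (g : F → ℝ) (S : F →ₗ[ℝ] E) (x : E) {lam : ℝ}
    (hlam : lam ≠ 0) (c : F) (d : E) :
    regularizedPrimal g S x lam c - regularizedDual x lam d =
      (g c - ⟪S c, d⟫) + ‖lam • (x - S c) - d‖ ^ 2 / (2 * lam) := by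
  have inner_split : ⟪x, d⟫ = ⟪x - S c, d⟫ + ⟪S c, d⟫ := by
    rw [← inner_add_left, sub_add_cancel]
  rw [regularizedPrimal, regularizedDual, inner_split, norm_sub_sq_real (lam • (x - S c)) d,
    norm_smul, mul_pow, Real.norm_eq_abs, sq_abs, real_inner_smul_left]
  field_simp
  ring

theorem regularizedDual_le_regularizedPrimal {g : F → ℝ} {S : F →ₗ[ℝ] E} {lam : ℝ}
    (hlam : 0 < lam) {d : E} (hd : d ∈ regularizedDualFeasible g S) (x : E) (c : F) :
    regularizedDual x lam d ≤ regularizedPrimal g S x lam c := by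
  rw [← sub_nonneg, regularizedPrimal_sub_regularizedDual g S x hlam.ne']
  exact add_nonneg (sub_nonneg.2 (hd c)) (by positivity)

theorem exists_forall_regularizedPrimal_le [TopologicalSpace F] {g : F → ℝ} (hg : Continuous g)
    (hg_coercive : Tendsto g (cocompact F) atTop) {S : F →ₗ[ℝ] E} (hS : Continuous S) (x : E)
    {lam : ℝ} (hlam : 0 ≤ lam) :
    ∃ c, ∀ c', regularizedPrimal g S x lam c ≤ regularizedPrimal g S x lam c' := by
  refine Continuous.exists_forall_le (by unfold regularizedPrimal; fun_prop)
    (tendsto_atTop_mono (fun c => ?_) hg_coercive)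
  exact le_add_of_nonneg_right (by positivity)

theorem inner_residual_le_sub_of_forall_regularizedPrimal_le {g : F → ℝ}
    (hg : ConvexOn ℝ univ g) {S : F →ₗ[ℝ] E} {x : E} {lam : ℝ} {c : F}
    (hc : ∀ c', regularizedPrimal g S x lam c ≤ regularizedPrimal g S x lam c') (c' : F) :
    ⟪S (c' - c), lam • (x - S c)⟫ ≤ g c' - g c := by
  set w := S (c' - c)
  set r := x - S c
  have le_linear : ∀ t ∈ Ioc (0 : ℝ) 1, ⟪w, lam • r⟫ - (g c' - g c) ≤ lam / 2 * ‖w‖ ^ 2 * t := by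
    rintro t ⟨ht0, ht1⟩
    have residual_eq : x - S ((1 - t) • c + t • c') = r - t • w := by
      simp only [w, r, map_add, map_sub, map_smul]
      module
    have norm_expand : ‖r - t • w‖ ^ 2 = ‖r‖ ^ 2 - 2 * t * ⟪w, r⟫ + t ^ 2 * ‖w‖ ^ 2 := by
      rw [norm_sub_sq_real, norm_smul, inner_smul_right, real_inner_comm, mul_pow,
        Real.norm_eq_abs, sq_abs]
      ring
    have convex_bound : g ((1 - t) • c + t • c') ≤ (1 - t) * g c + t * g c' :=
      hg.2 (mem_univ c) (mem_univ c') (sub_nonneg.2 ht1) ht0.le (sub_add_cancel 1 t)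
    have minimal := hc ((1 - t) • c + t • c')
    rw [regularizedPrimal, regularizedPrimal, residual_eq, norm_expand] at minimal
    rw [inner_smul_right]
    refine le_of_mul_le_mul_left ?_ ht0
    linarith
  have linear_tendsto : Tendsto (fun t => lam / 2 * ‖w‖ ^ 2 * t) (𝓝[>] 0) (𝓝 0) :=
    tendsto_nhdsWithin_of_tendsto_nhds (Continuous.tendsto' (by fun_prop) _ _ (mul_zero _))
  exact sub_nonpos.1 <|
    ge_of_tendsto linear_tendsto (eventually_of_mem (Ioc_mem_nhdsGT one_pos) le_linear)

section Seminorm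

variable {p : Seminorm ℝ F} {S : F →ₗ[ℝ] E} {x : E} {lam : ℝ} {c : F}

theorem residual_mem_regularizedDualFeasible
    (hc : ∀ c', regularizedPrimal p S x lam c ≤ regularizedPrimal p S x lam c') :
    lam • (x - S c) ∈ regularizedDualFeasible p S := fun v => by
  have subgradient := inner_residual_le_sub_of_forall_regularizedPrimal_le p.convexOn hc (c + v)
  rw [add_sub_cancel_left] at subgradient
  linarith [map_add_le_add p c v]

theorem inner_residual_eq_seminorm
    (hc : ∀ c', regularizedPrimal p S x lam c ≤ regularizedPrimal p S x lam c') :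
    ⟪S c, lam • (x - S c)⟫ = p c := by
  refine le_antisymm (residual_mem_regularizedDualFeasible hc c) ?_
  have subgradient := inner_residual_le_sub_of_forall_regularizedPrimal_le p.convexOn hc 0
  rwa [zero_sub, map_neg, inner_neg_left, map_zero, zero_sub, neg_le_neg_iff] at subgradient

theorem regularizedDual_residual_eq_regularizedPrimal (hlam : lam ≠ 0)
    (hc : ∀ c', regularizedPrimal p S x lam c ≤ regularizedPrimal p S x lam c') :
    regularizedDual x lam (lam • (x - S c)) = regularizedPrimal p S x lam c := by
  have gap := regularizedPrimal_sub_regularizedDual p S x hlam c (lam • (x - S c))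
  rw [inner_residual_eq_seminorm hc, sub_self, sub_self, norm_zero, zero_pow two_ne_zero,
    zero_div, add_zero] at gap
  exact (sub_eq_zero.1 gap).symm

end Seminorm

end RegularizedLeastSquares

section L1

variable {ι E : Type*} [Fintype ι] [NormedAddCommGroup E] [InnerProductSpace ℝ E]

/-- The `ℓ¹` norm on `ι → ℝ`, whose norm instance is the sup norm. -/
def l1Seminorm (ι : Type*) [Fintype ι] : Seminorm ℝ (ι → ℝ) :=
  Seminorm.of (fun c => ∑ i, |c i|)
    (fun c c' => by
      rw [← Finset.sum_add_distrib]
      exact Finset.sum_le_sum fun i _ => abs_add_le (c i) (c' i))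
    (fun a c => by
      simp only [Pi.smul_apply, smul_eq_mul, abs_mul, Finset.mul_sum, Real.norm_eq_abs])

theorem l1Seminorm_apply (c : ι → ℝ) : l1Seminorm ι c = ∑ i, |c i| := rfl

theorem continuous_l1Seminorm : Continuous (l1Seminorm ι) := by
  change Continuous fun c : ι → ℝ => ∑ i, |c i|
  fun_prop

theorem norm_le_l1Seminorm (c : ι → ℝ) : ‖c‖ ≤ l1Seminorm ι c :=
  (pi_norm_le_iff_of_nonneg (apply_nonneg _ c)).2 fun i =>
    Finset.single_le_sum (f := fun i => |c i|) (fun i _ => abs_nonneg (c i)) (Finset.mem_univ i)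

theorem tendsto_l1Seminorm_cocompact_atTop : Tendsto (l1Seminorm ι) (cocompact (ι → ℝ)) atTop :=
  tendsto_atTop_mono norm_le_l1Seminorm (tendsto_norm_cocompact_atTop (E := ι → ℝ))

theorem mem_regularizedDualFeasible_l1Seminorm {s : ι → E} {d : E} :
    d ∈ regularizedDualFeasible (l1Seminorm ι) (Fintype.linearCombination ℝ s) ↔
      ∀ i, |⟪s i, d⟫| ≤ 1 := by
  classical
  constructor
  · intro hd i
    have signed_bound (e : ℝ) : e * ⟪s i, d⟫ ≤ |e| := by
      simpa [l1Seminorm_apply, Pi.single_apply, apply_ite abs, real_inner_smul_left]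
        using hd (Pi.single i e)
    have upper := signed_bound 1
    have lower := signed_bound (-1)
    rw [abs_neg] at lower
    rw [abs_one] at upper lower
    exact abs_le.2 ⟨by linarith, by linarith⟩
  · intro hd v
    rw [Fintype.linearCombination_apply, sum_inner, l1Seminorm_apply]
    refine Finset.sum_le_sum fun i _ => ?_
    calc ⟪v i • s i, d⟫ = v i * ⟪s i, d⟫ := real_inner_smul_left _ _ _
      _ ≤ |v i| * |⟪s i, d⟫| := (le_abs_self _).trans_eq (abs_mul _ _)
      _ ≤ |v i| := mul_le_of_le_one_right (abs_nonneg _) (hd i)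

theorem strong_duality_l1_reconstruction_general (x : E) {lam : ℝ} (hlam : 0 < lam) (s : ι → E) :
    sInf {r : ℝ | ∃ c : ι → ℝ,
        r = (∑ i, |c i|) + (lam / 2) * ‖x - ∑ i, c i • s i‖ ^ 2} =
      sSup {r : ℝ | ∃ d : E,
        (∀ i, |⟪s i, d⟫| ≤ 1) ∧ r = ⟪x, d⟫ - ‖d‖ ^ 2 / (2 * lam)} ∧
    (∃ cstar : ι → ℝ,
      (∑ i, |cstar i|) + (lam / 2) * ‖x - ∑ i, cstar i • s i‖ ^ 2 =
        sInf {r : ℝ | ∃ c : ι → ℝ,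
          r = (∑ i, |c i|) + (lam / 2) * ‖x - ∑ i, c i • s i‖ ^ 2}) ∧
    (∃ dstar : E, (∀ i, |⟪s i, dstar⟫| ≤ 1) ∧
      ⟪x, dstar⟫ - ‖dstar‖ ^ 2 / (2 * lam) =
        sSup {r : ℝ | ∃ d : E,
          (∀ i, |⟪s i, d⟫| ≤ 1) ∧ r = ⟪x, d⟫ - ‖d‖ ^ 2 / (2 * lam)}) := by
  let S := Fintype.linearCombination ℝ s
  obtain ⟨c, hc⟩ := exists_forall_regularizedPrimal_le continuous_l1Seminorm
    tendsto_l1Seminorm_cocompact_atTop S.continuous_of_finiteDimensional x hlam.le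
  let d := lam • (x - S c)
  have feasible : ∀ i, |⟪s i, d⟫| ≤ 1 :=
    mem_regularizedDualFeasible_l1Seminorm.1 (residual_mem_regularizedDualFeasible hc)
  have values_eq : regularizedDual x lam d = regularizedPrimal (l1Seminorm ι) S x lam c :=
    regularizedDual_residual_eq_regularizedPrimal hlam.ne' hc
  have primal_least : IsLeast {r | ∃ c', r = regularizedPrimal (l1Seminorm ι) S x lam c'}
      (regularizedPrimal (l1Seminorm ι) S x lam c) :=
    ⟨⟨c, rfl⟩, fun _ ⟨c', hr⟩ => hr.trans_ge (hc c')⟩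
  have dual_greatest : IsGreatest {r | ∃ d', (∀ i, |⟪s i, d'⟫| ≤ 1) ∧ r = regularizedDual x lam d'}
      (regularizedDual x lam d) := by
    refine ⟨⟨d, feasible, rfl⟩, ?_⟩
    rintro _ ⟨d', hd', rfl⟩
    exact (regularizedDual_le_regularizedPrimal hlam
      (mem_regularizedDualFeasible_l1Seminorm.2 hd') x c).trans_eq values_eq.symm
  exact ⟨primal_least.csInf_eq.trans (values_eq.symm.trans dual_greatest.csSup_eq.symm),
    ⟨c, primal_least.csInf_eq.symm⟩, ⟨d, feasible, dual_greatest.csSup_eq.symm⟩⟩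

end L1

theorem strong_duality_l1_reconstruction
    (n M : ℕ) (hn : 1 ≤ n) (hM : 1 ≤ M)
    (x : EuclideanSpace ℝ (Fin n)) (lam : ℝ) (hlam : 0 < lam)
    (s : Fin M → EuclideanSpace ℝ (Fin n)) :
    sInf {r : ℝ | ∃ c : Fin M → ℝ,
        r = (∑ i, |c i|) + (lam / 2) * ‖x - ∑ i, c i • s i‖ ^ 2} =
      sSup {r : ℝ | ∃ d : EuclideanSpace ℝ (Fin n),
        (∀ i, |⟪s i, d⟫| ≤ 1) ∧ r = ⟪x, d⟫ - ‖d‖ ^ 2 / (2 * lam)} ∧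
    (∃ cstar : Fin M → ℝ,
      (∑ i, |cstar i|) + (lam / 2) * ‖x - ∑ i, cstar i • s i‖ ^ 2 =
        sInf {r : ℝ | ∃ c : Fin M → ℝ,
          r = (∑ i, |c i|) + (lam / 2) * ‖x - ∑ i, c i • s i‖ ^ 2}) ∧
    (∃ dstar : EuclideanSpace ℝ (Fin n), (∀ i, |⟪s i, dstar⟫| ≤ 1) ∧
      ⟪x, dstar⟫ - ‖dstar‖ ^ 2 / (2 * lam) =
        sSup {r : ℝ | ∃ d : EuclideanSpace ℝ (Fin n),
          (∀ i, |⟪s i, d⟫| ≤ 1) ∧ r = ⟪x, d⟫ - ‖d‖ ^ 2 / (2 * lam)}) :=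
  strong_duality_l1_reconstruction_general x hlam s
end

section
/- Let n ≥ 2, let E := EuclideanSpace ℝ (Fin n), let α > 0, γ := Real.exp (−α), and let ε ≥ 0 satisfy γ/2 + 2ε ≤ 1. Let S₁ := {x : E | (∀ i, |x i| ≤ 1) ∧ |x 0| ≤ γ/2} and S₂ := {x : E | (∀ i, |x i| ≤ 1) ∧ |x 1| ≤ γ/2}, and let q₁ be the uniform probability measure on S₁. Then q₁ ((S₂)^{+2ε}) = γ/2 + 2ε, where the expansion is with respect to the Euclidean metric. -/
open MeasureTheory

/-!
Within the box, the `e`-expansion of a slab in direction `k` is simply the slab of half-width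
`b + e` in the same direction: distances dominate coordinate distances, and conversely a point of
the thicker slab reaches the thinner one by moving its `k`-th coordinate alone, which stays in the
box. A slab in another direction `j` is again a box, with the same extent as the original one in
direction `k`, so the fraction of it cut out by the thicker slab is a ratio of `k`-th half-widths.
-/

open Function

section Box

variable {ι : Type*} {p : ENNReal} {β : ι → Type*} [∀ i, Norm (β i)]

/-- The box centred at the origin with half-width `r i` in direction `i`. The coordinates may lie in
arbitrary normed groups, in which case the box is a product of closed balls. -/
def centeredBox (r : ι → ℝ) : Set (PiLp p β) :=
  {x | ∀ i, ‖x i‖ ≤ r i}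

/-- The part of the box `centeredBox r` within distance `b` of the coordinate hyperplane
`x k = 0`. -/
def coordinateSlab (r : ι → ℝ) (k : ι) (b : ℝ) : Set (PiLp p β) :=
  centeredBox r ∩ {x | ‖x k‖ ≤ b}

lemma coordinateSlab_subset_centeredBox (r : ι → ℝ) (k : ι) (b : ℝ) :
    (coordinateSlab r k b : Set (PiLp p β)) ⊆ centeredBox r :=
  Set.inter_subset_left

lemma coordinateSlab_eq_centeredBox [DecidableEq ι] (r : ι → ℝ) (k : ι) (b : ℝ) :
    (coordinateSlab r k b : Set (PiLp p β)) = centeredBox (update r k (min b (r k))) := by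
  ext x
  change (∀ i, ‖x i‖ ≤ r i) ∧ ‖x k‖ ≤ b ↔ ∀ i, ‖x i‖ ≤ update r k (min b (r k)) i
  rw [forall_update_iff r fun i t ↦ ‖x i‖ ≤ t, le_min_iff]
  refine ⟨fun ⟨hr, hb⟩ ↦ ⟨⟨hb, hr k⟩, fun i _ ↦ hr i⟩, fun ⟨⟨hb, hk⟩, hr⟩ ↦ ⟨fun i ↦ ?_, hb⟩⟩
  obtain rfl | hik := eq_or_ne i k
  exacts [hk, hr i hik]

lemma coordinateSlab_inter_coordinateSlab [DecidableEq ι] (r : ι → ℝ) (j k : ι) (a b : ℝ) :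
    (coordinateSlab r k b ∩ coordinateSlab r j a : Set (PiLp p β)) =
      coordinateSlab (update r j (min a (r j))) k b :=
  calc coordinateSlab r k b ∩ coordinateSlab r j a
    _ = centeredBox r ∩ coordinateSlab r j a ∩ {x | ‖x k‖ ≤ b} := Set.inter_right_comm _ _ _
    _ = centeredBox (update r j (min a (r j))) ∩ {x | ‖x k‖ ≤ b} := by
      rw [Set.inter_eq_right.2 (coordinateSlab_subset_centeredBox r j a),
        coordinateSlab_eq_centeredBox]

end Box

section Expansion

variable {ι : Type*} [Fintype ι] {p : ENNReal} [Fact (1 ≤ p)] {β : ι → Type*}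

lemma dist_toLp_update [DecidableEq ι] [∀ i, SeminormedAddCommGroup (β i)] (x : PiLp p β) (k : ι)
    (u : β k) : dist x (WithLp.toLp p (update x.ofLp k u)) = dist (x k) u := by
  have hsub : x - WithLp.toLp p (update x.ofLp k u) = PiLp.single p k (x k - u) := by
    ext i
    obtain rfl | hik := eq_or_ne i k <;> simp [*]
  rw [dist_eq_norm, hsub, PiLp.norm_single, dist_eq_norm]

theorem expandSet_coordinateSlab_inter_centeredBox [∀ i, NormedAddCommGroup (β i)]
    [∀ i, NormedSpace ℝ (β i)] {r : ι → ℝ} {k : ι} {b e : ℝ} (hb : 0 ≤ b) (he : 0 ≤ e)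
    (hbr : b ≤ r k) :
    (expandSet (coordinateSlab r k b) e ∩ centeredBox r : Set (PiLp p β)) =
      coordinateSlab r k (b + e) := by
  classical
  ext x
  constructor
  · rintro ⟨⟨y, ⟨-, hyk⟩, hxy⟩, hx⟩
    refine ⟨hx, ?_⟩
    calc ‖x k‖ ≤ ‖y k‖ + dist (x k) (y k) := by
          rw [dist_eq_norm]; exact norm_le_norm_add_norm_sub' _ _
      _ ≤ b + e := add_le_add hyk ((PiLp.dist_apply_le x y k).trans hxy)
  · rintro ⟨hx, hxk⟩
    obtain ⟨u, hxu, hu⟩ : ∃ u, dist (x k) u ≤ e ∧ dist u 0 ≤ b :=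
      exists_dist_le_le he hb (by rwa [dist_zero_right])
    rw [dist_zero_right] at hu
    refine ⟨⟨WithLp.toLp p (update x.ofLp k u), ⟨?_, by simpa using hu⟩, ?_⟩, hx⟩
    · exact (forall_update_iff x.ofLp fun i t ↦ ‖t‖ ≤ r i).2 ⟨hu.trans hbr, fun i _ ↦ hx i⟩
    · rwa [dist_toLp_update]

end Expansion

section Volume

variable {ι : Type*} [Fintype ι]

lemma volume_centeredBox (r : ι → ℝ) :
    volume (centeredBox r : Set (EuclideanSpace ℝ ι)) = ∏ i, ENNReal.ofReal (2 * r i) := by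
  have hpreimage : (centeredBox r : Set (EuclideanSpace ℝ ι)) =
      (MeasurableEquiv.toLp 2 (ι → ℝ)).symm ⁻¹'
        Set.univ.pi fun i ↦ Metric.closedBall 0 (r i) := by
    ext x
    simp [centeredBox]
  rw [hpreimage,
    (EuclideanSpace.volume_preserving_symm_measurableEquiv_toLp ι).measure_preimage_equiv,
    volume_pi_pi]
  simp only [Real.volume_closedBall]

lemma volume_coordinateSlab_div_volume_centeredBox {r : ι → ℝ} (hr : ∀ i, 0 < r i) {k : ι} {b : ℝ}
    (hb : b ≤ r k) :
    volume (coordinateSlab r k b : Set (EuclideanSpace ℝ ι)) /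
      volume (centeredBox r : Set (EuclideanSpace ℝ ι)) = ENNReal.ofReal (b / r k) := by
  classical
  have hcongr : ∏ i ∈ {k}ᶜ, ENNReal.ofReal (2 * update r k b i) =
      ∏ i ∈ {k}ᶜ, ENNReal.ofReal (2 * r i) :=
    Finset.prod_congr rfl fun i hi ↦ by rw [update_of_ne (by simpa using hi)]
  have hne_zero : ∏ i ∈ {k}ᶜ, ENNReal.ofReal (2 * r i) ≠ 0 :=
    Finset.prod_ne_zero_iff.2 fun i _ ↦ by simpa using hr i
  have hne_top : ∏ i ∈ {k}ᶜ, ENNReal.ofReal (2 * r i) ≠ ⊤ :=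
    ENNReal.prod_ne_top fun _ _ ↦ ENNReal.ofReal_ne_top
  rw [coordinateSlab_eq_centeredBox, min_eq_left hb, volume_centeredBox, volume_centeredBox,
    Fintype.prod_eq_mul_prod_compl k, Fintype.prod_eq_mul_prod_compl k, hcongr,
    ENNReal.mul_div_mul_right _ _ hne_zero hne_top, update_self,
    ← ENNReal.ofReal_div_of_pos (mul_pos two_pos (hr k)), mul_div_mul_left _ _ two_ne_zero]

theorem uniform_measure_of_expanded_slab_general {r : ι → ℝ} (hr : ∀ i, 0 < r i) {j k : ι}
    (hjk : j ≠ k) {a b e : ℝ} (ha : 0 < a) (hb : 0 ≤ b) (he : 0 ≤ e) (hbe : b + e ≤ r k) :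
    volume (expandSet (coordinateSlab r k b) e ∩ coordinateSlab r j a :
        Set (EuclideanSpace ℝ ι)) /
      volume (coordinateSlab r j a : Set (EuclideanSpace ℝ ι)) =
        ENNReal.ofReal ((b + e) / r k) := by
  classical
  set s := update r j (min a (r j))
  have hsk : s k = r k := update_of_ne hjk.symm _ _
  have hs_pos : ∀ i, 0 < s i :=
    (forall_update_iff r fun _ t ↦ 0 < t).2 ⟨lt_min ha (hr j), fun i _ ↦ hr i⟩
  have hinter : (expandSet (coordinateSlab r k b) e ∩ coordinateSlab r j a :
      Set (EuclideanSpace ℝ ι)) = coordinateSlab s k (b + e) :=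
    calc expandSet (coordinateSlab r k b) e ∩ coordinateSlab r j a
      _ = expandSet (coordinateSlab r k b) e ∩ centeredBox r ∩ coordinateSlab r j a := by
        rw [Set.inter_assoc, Set.inter_eq_right.2 (coordinateSlab_subset_centeredBox r j a)]
      _ = coordinateSlab r k (b + e) ∩ coordinateSlab r j a := by
        rw [expandSet_coordinateSlab_inter_centeredBox hb he
          ((le_add_of_nonneg_right he).trans hbe)]
      _ = coordinateSlab s k (b + e) := coordinateSlab_inter_coordinateSlab r j k a (b + e)
  rw [hinter, coordinateSlab_eq_centeredBox r j a,
    volume_coordinateSlab_div_volume_centeredBox hs_pos (hsk ▸ hbe), hsk]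

end Volume

theorem uniform_measure_of_expanded_slab
    (n : ℕ) (hn : 2 ≤ n)
    (α : ℝ) (hα : 0 < α) (γ : ℝ) (hγ : γ = Real.exp (-α))
    (ε : ℝ) (hε : 0 ≤ ε) (hε1 : γ / 2 + 2 * ε ≤ 1)
    (S₁ S₂ : Set (EuclideanSpace ℝ (Fin n)))
    (hS₁ : S₁ = {x | (∀ i, |x i| ≤ 1) ∧ |x ⟨0, by omega⟩| ≤ γ / 2})
    (hS₂ : S₂ = {x | (∀ i, |x i| ≤ 1) ∧ |x ⟨1, by omega⟩| ≤ γ / 2})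
    -- `q₁` is the uniform probability measure on `S₁`
    (q₁ : Set (EuclideanSpace ℝ (Fin n)) → ENNReal)
    (hq₁ : ∀ B, q₁ B = volume (B ∩ S₁) / volume S₁) :
    q₁ (expandSet S₂ (2 * ε)) = ENNReal.ofReal (γ / 2 + 2 * ε) := by
  have hγ_pos : 0 < γ / 2 := half_pos (hγ ▸ Real.exp_pos _)
  rw [hq₁, hS₁, hS₂]
  exact (uniform_measure_of_expanded_slab_general (r := fun _ ↦ 1) (fun _ ↦ one_pos) (by simp)
    hγ_pos hγ_pos.le (by positivity) hε1).trans (by rw [div_one])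
end
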